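/- Infratriangle inequality (norm 1 case): let f, g ∈ ℤ[θ]. (1) If f, g ∈ O_K⁰ then |f + g|_θ ≤ θ·max(|f|_θ, |g|_θ). (2) If f, g ∈ O_K¹ then |f + g|_θ ≤ θ²·max(|f|_θ, |g|_θ). (3) If f ∈ O_K⁰ and g ∈ O_K¹ then |f + g|_θ ≤ θ⁴·max(|f|_θ, |g|_θ). In particular |·|_θ is an infranorm on ℤ[θ] with constant ρ = θ⁴. -/

import Mathlib

/-!
For `x = p + qθ` write `x' = p + qθ⁻¹`. Everything rests on describing the `θ`-integers as a
cut-and-project set: for `x ∈ ℤ[θ]` with `x x' ≥ 0`, one has `x ∈ ℤ_θ` if and only if `|x'| < θ`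
(`mem_Ztheta_iff`).

* If `x = Σ b_i θ^i` with `(b_i)` admissible, then `x' = Σ b_i θ^{-i}`. Peeling off the lowest digit
  and keeping track of whether an unfinished block `(a-1)(a-2)⋯(a-2)` has just been read gives
  `x' < θ`, and even `x' < θ - 1` while such a block is pending (`conj_lt_of_admissible`).
* Conversely, for `x ≥ 0` and `0 ≤ x' < θ` the lowest digit must be `⌊x'⌋`, and
  `(x - ⌊x'⌋)/θ` satisfies the same inequalities, because an element of `ℤ[θ]` with small `x` and
  `x'` is one of very few explicit numbers. As `x` shrinks by the factor `θ` at each step, the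
  process ends at `0` (`exists_admissible`).

Dividing by `θ^k` multiplies the conjugate by `θ^k`, so for `0 ≠ x ∈ O_K⁰` the norm `|x|_θ` is the
power `θ^n` with `θ^n ≤ |x'| < θ^{n+1}`; for `0 ≠ x ∈ O_K¹` the same holds with `|x'|` replaced by
`(1 - θ⁻¹)|x'|`. The three inequalities follow from the ordinary triangle inequality for
`|f' + g'|` together with `θ ≥ 2` and `θ/(θ - 1) ≤ θ`.
-/


noncomputable section

/-- The real quadratic unit `θ = (a + √(a²−4))/2`, the larger root of `θ² = aθ − 1`
(the norm `N(θ) = 1` case, `a ≥ 3`). -/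
def theta1 (a : ℕ) : ℝ := ((a : ℝ) + Real.sqrt ((a : ℝ) ^ 2 - 4)) / 2

/-- Membership in the ring `ℤ[θ]`. -/
def inR1 (a : ℕ) (x : ℝ) : Prop := ∃ p q : ℤ, x = (p : ℝ) + (q : ℝ) * theta1 a

/-- A finite integer sequence, supported in `[m, M]`, is admissible (norm `1` case) if all its
entries lie in `{0, …, a−1}` and it contains no forbidden block: no indices `i < j` with
`b_i = b_j = a−1` and `b_k = a−2` for all `i < k < j`. -/
def AdmissibleOn1 (a : ℕ) (m M : ℤ) (b : ℤ → ℤ) : Prop :=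
  (∀ i, b i ≠ 0 → m ≤ i ∧ i ≤ M) ∧
  (∀ i, 0 ≤ b i ∧ b i ≤ (a : ℤ) - 1) ∧
  ¬ ∃ i j : ℤ, i < j ∧ b i = (a : ℤ) - 1 ∧ b j = (a : ℤ) - 1 ∧
      ∀ k, i < k → k < j → b k = (a : ℤ) - 2

/-- The set `ℤ_θ` of θ-integers: signed sums `± Σ_{i=0}^{M} b_i θ^i` with `(b_i)` admissible. -/
def Ztheta1 (a : ℕ) : Set ℝ :=
  { x | ∃ (ε : ℤ) (M : ℤ) (b : ℤ → ℤ), (ε = 1 ∨ ε = -1) ∧ 0 ≤ M ∧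
      AdmissibleOn1 a 0 M b ∧
      x = (ε : ℝ) * ∑ i ∈ Finset.Icc (0 : ℤ) M, (b i : ℝ) * theta1 a ^ i }

/-- `x ∈ O_K⁰`: `x ∈ ℤ[θ]` and `x` has the same sign as its Galois conjugate `x'`. -/
def inOK0 (a : ℕ) (x : ℝ) : Prop :=
  ∃ p q : ℤ, x = (p : ℝ) + (q : ℝ) * theta1 a ∧
    0 ≤ x * ((p : ℝ) + (q : ℝ) * (theta1 a)⁻¹)

/-- `x ∈ O_K¹`: `x ∈ ℤ[θ]` and `x` has sign opposite to its Galois conjugate `x'`. -/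
def inOK1 (a : ℕ) (x : ℝ) : Prop :=
  ∃ p q : ℤ, x = (p : ℝ) + (q : ℝ) * theta1 a ∧
    x * ((p : ℝ) + (q : ℝ) * (theta1 a)⁻¹) ≤ 0

/-- `v(x) = max { k : ℤ | x / θ^k ∈ ℤ_θ }` (as a supremum in `ℤ`). -/
def vval1 (a : ℕ) (x : ℝ) : ℤ := sSup { k : ℤ | x / theta1 a ^ k ∈ Ztheta1 a }

open Classical in
/-- The θ-adic infranorm (norm `1` case): for nonzero `x ∈ O_K⁰` it is `θ^{−v(x)}`, and for
nonzero `x ∈ O_K¹` it is `|T·x|_θ` where `T = θ − 1`; `|0|_θ = 0`. -/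
def thNorm1 (a : ℕ) (x : ℝ) : ℝ :=
  if x = 0 then 0
  else if inOK0 a x then theta1 a ^ (-vval1 a x)
  else theta1 a ^ (-vval1 a ((theta1 a - 1) * x))

/-- A sequence in `ℝ` is `|·|_θ`-Cauchy. -/
def IsThCauchy1 (a : ℕ) (x : ℕ → ℝ) : Prop :=
  ∀ ε : ℝ, 0 < ε → ∃ N : ℕ, ∀ i j : ℕ, N ≤ i → N ≤ j → thNorm1 a (x i - x j) < ε

/-! ### The unit `θ` and conjugation on `ℤ[θ]` -/

lemma theta_quad (a : ℕ) (ha : 3 ≤ a) : theta1 a * ((a : ℝ) - theta1 a) = 1 := by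
  have h3 : (3 : ℝ) ≤ a := by exact_mod_cast ha
  have hs := Real.sq_sqrt (show (0 : ℝ) ≤ (a : ℝ) ^ 2 - 4 by nlinarith)
  unfold theta1
  nlinarith

lemma theta_gt (a : ℕ) (ha : 3 ≤ a) : (a : ℝ) - 1 / 2 < theta1 a := by
  have h3 : (3 : ℝ) ≤ a := by exact_mod_cast ha
  have hs : (a : ℝ) - 1 < Real.sqrt ((a : ℝ) ^ 2 - 4) := by
    apply Real.lt_sqrt_of_sq_lt
    nlinarith
  unfold theta1
  linarith

lemma theta_two_lt (a : ℕ) (ha : 3 ≤ a) : 2 < theta1 a := by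
  have h3 : (3 : ℝ) ≤ a := by exact_mod_cast ha
  linarith [theta_gt a ha]

lemma theta_inv (a : ℕ) (ha : 3 ≤ a) : (theta1 a)⁻¹ = (a : ℝ) - theta1 a :=
  inv_eq_of_mul_eq_one_right (theta_quad a ha)

lemma theta_lt (a : ℕ) (ha : 3 ≤ a) : theta1 a < a := by
  have h := theta_two_lt a ha
  have : 0 < (theta1 a)⁻¹ := by positivity
  rw [theta_inv a ha] at this
  linarith

/-- `IsGalConj a x y`: `x` lies in `ℤ[θ]` and `y` is its Galois conjugate `x'`. -/
def IsGalConj (a : ℕ) (x y : ℝ) : Prop :=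
  ∃ p q : ℤ, x = (p : ℝ) + (q : ℝ) * theta1 a ∧ y = (p : ℝ) + (q : ℝ) * (theta1 a)⁻¹

/-- `1` and `θ` are linearly independent over `ℤ`, since `a² - 4` lies strictly between the
consecutive squares `(a-1)²` and `a²`. -/
lemma theta_indep (a : ℕ) (ha : 3 ≤ a) (P Q : ℤ) (h : (P : ℝ) + Q * theta1 a = 0) :
    P = 0 ∧ Q = 0 := by
  have hQ : Q = 0 := by
    by_contra hQ
    have hq := theta_quad a ha
    have e : ((2 * P + a * Q : ℤ) : ℝ) ^ 2 = (((a : ℤ) ^ 2 - 4) * Q ^ 2 : ℤ) := by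
      push_cast
      have hP : (P : ℝ) = - (Q * theta1 a) := by linarith
      rw [hP]
      linear_combination (-4 * (Q : ℝ) ^ 2) * hq
    have e' : (2 * P + a * Q : ℤ) ^ 2 = ((a : ℤ) ^ 2 - 4) * Q ^ 2 := by exact_mod_cast e
    have hd : Q ∣ 2 * P + a * Q :=
      (Int.pow_dvd_pow_iff (two_ne_zero)).1 ⟨(a : ℤ) ^ 2 - 4, by rw [e']; ring⟩
    obtain ⟨z, hz⟩ := hd
    rw [hz] at e'
    have hz2 : z ^ 2 = (a : ℤ) ^ 2 - 4 := by
      have : Q ^ 2 ≠ 0 := pow_ne_zero _ hQ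
      apply mul_left_cancel₀ this
      linear_combination e'
    have h3 : (3 : ℤ) ≤ a := by exact_mod_cast ha
    have h1 : |z| < a := abs_lt_of_sq_lt_sq (by linarith) (by linarith)
    have h2 : (a : ℤ) - 1 < |z| := by
      apply lt_of_pow_lt_pow_left₀ 2 (abs_nonneg z)
      rw [sq_abs]
      nlinarith
    omega
  subst hQ
  refine ⟨?_, rfl⟩
  simpa using h

namespace IsGalConj

variable {a : ℕ} {x y u w : ℝ}

lemma unique (ha : 3 ≤ a) (h : IsGalConj a x y) (h' : IsGalConj a x w) : y = w := by
  obtain ⟨p, q, hx, rfl⟩ := h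
  obtain ⟨p', q', hx', rfl⟩ := h'
  obtain ⟨h1, h2⟩ := theta_indep a ha (p - p') (q - q') (by push_cast; linarith)
  rw [sub_eq_zero.1 h1, sub_eq_zero.1 h2]

lemma add (h : IsGalConj a x y) (h' : IsGalConj a u w) : IsGalConj a (x + u) (y + w) := by
  obtain ⟨p, q, rfl, rfl⟩ := h
  obtain ⟨p', q', rfl, rfl⟩ := h'
  exact ⟨p + p', q + q', by push_cast; ring, by push_cast; ring⟩

lemma neg (h : IsGalConj a x y) : IsGalConj a (-x) (-y) := by
  obtain ⟨p, q, rfl, rfl⟩ := h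
  exact ⟨-p, -q, by push_cast; ring, by push_cast; ring⟩

lemma int (n : ℤ) : IsGalConj a n n := ⟨n, 0, by simp, by simp⟩

lemma theta_mul (ha : 3 ≤ a) (h : IsGalConj a x y) :
    IsGalConj a (theta1 a * x) ((theta1 a)⁻¹ * y) := by
  have hq := theta_quad a ha
  obtain ⟨p, q, rfl, rfl⟩ := h
  refine ⟨-q, p + a * q, ?_, ?_⟩ <;> (try rw [theta_inv a ha]) <;> push_cast <;>
    linear_combination (-(q : ℝ)) * hq

lemma theta_inv_mul (ha : 3 ≤ a) (h : IsGalConj a x y) :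
    IsGalConj a ((theta1 a)⁻¹ * x) (theta1 a * y) := by
  have hq := theta_quad a ha
  obtain ⟨p, q, rfl, rfl⟩ := h
  refine ⟨q + a * p, -p, ?_, ?_⟩ <;> rw [theta_inv a ha] <;> push_cast <;>
    linear_combination (q : ℝ) * hq

lemma div_zpow (ha : 3 ≤ a) (h : IsGalConj a x y) (k : ℤ) :
    IsGalConj a (x / theta1 a ^ k) (y * theta1 a ^ k) := by
  have h0 : theta1 a ≠ 0 := by linarith [theta_two_lt a ha]
  induction k using Int.induction_on with
  | zero => simpa using h
  | succ n ih =>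
    convert theta_inv_mul ha ih using 1
    · rw [zpow_add_one₀ h0]; field_simp
    · rw [zpow_add_one₀ h0]; ring
  | pred n ih =>
    convert theta_mul ha ih using 1
    · rw [zpow_sub_one₀ h0]; field_simp
    · rw [zpow_sub_one₀ h0]; ring

lemma ne_zero (ha : 3 ≤ a) (h : IsGalConj a x y) (hx : x ≠ 0) : y ≠ 0 := by
  rintro rfl
  obtain ⟨p, q, rfl, hy⟩ := h
  have h0 : theta1 a ≠ 0 := by linarith [theta_two_lt a ha]
  have := theta_indep a ha q p (by field_simp at hy; linarith)
  apply hx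
  simp [this.1, this.2]

end IsGalConj

/-! ### The `θ`-integers as a cut-and-project set -/

/-- No block `(a-2)⋯(a-2)(a-1)` begins at index `0`; this is the condition under which the digit
`a-1` may be placed directly below the sequence. -/
def NoInit (a : ℕ) (b : ℤ → ℤ) : Prop :=
  ¬ ∃ j : ℤ, 0 ≤ j ∧ b j = (a : ℤ) - 1 ∧ ∀ k, 0 ≤ k → k < j → b k = (a : ℤ) - 2

lemma sum_Icc_succ (f : ℤ → ℝ) (n : ℕ) :
    ∑ i ∈ Finset.Icc (0 : ℤ) (n + 1 : ℕ), f i = f 0 + ∑ i ∈ Finset.Icc (0 : ℤ) n, f (i + 1) := by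
  have key : ∀ (g : ℤ → ℝ) (m : ℕ),
      ∑ i ∈ Finset.Icc (0 : ℤ) m, g i = ∑ i ∈ Finset.range (m + 1), g i := by
    intro g m
    induction m with
    | zero => simp
    | succ m ih =>
      rw [Finset.sum_range_succ, ← ih]
      have : Finset.Icc (0 : ℤ) (m + 1 : ℕ)
          = insert ((m + 1 : ℕ) : ℤ) (Finset.Icc (0 : ℤ) m) := by
        ext i; simp; omega
      rw [this, Finset.sum_insert (by simp)]
      ring
  rw [key, key, Finset.sum_range_succ']
  push_cast
  ring

/-- Values of admissible sequences are nonnegative with conjugate in `[0, θ)`, and even in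
`[0, θ - 1)` when the sequence may follow a pending block `(a-1)(a-2)⋯(a-2)`. -/
lemma conj_lt_of_admissible (a : ℕ) (ha : 3 ≤ a) (M : ℕ) (b : ℤ → ℤ)
    (hb : AdmissibleOn1 a 0 M b) :
    ∃ y, IsGalConj a (∑ i ∈ Finset.Icc (0 : ℤ) M, (b i : ℝ) * theta1 a ^ i) y ∧
      0 ≤ ∑ i ∈ Finset.Icc (0 : ℤ) M, (b i : ℝ) * theta1 a ^ i ∧
      0 ≤ y ∧ y < theta1 a ∧ (NoInit a b → y < theta1 a - 1) := by
  have h2 := theta_two_lt a ha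
  have hg := theta_gt a ha
  have hl := theta_lt a ha
  have hq := theta_quad a ha
  have h3 : (3 : ℝ) ≤ a := by exact_mod_cast ha
  have htop : NoInit a b → b 0 ≤ (a : ℤ) - 2 := by
    intro hn
    by_contra hlt
    exact hn ⟨0, le_rfl, by have := (hb.2.1 0).2; omega, fun k h1 h2 => by omega⟩
  induction M generalizing b with
  | zero =>
    have h01 : (0 : ℝ) ≤ b 0 := by exact_mod_cast (hb.2.1 0).1
    have h02 : (b 0 : ℝ) ≤ a - 1 := by exact_mod_cast (hb.2.1 0).2
    refine ⟨b 0, by simpa using IsGalConj.int (b 0), by simpa using h01, h01, by linarith, ?_⟩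
    intro hn
    have : (b 0 : ℝ) ≤ a - 2 := by exact_mod_cast htop hn
    linarith
  | succ n ih =>
    obtain ⟨hs, hd, hf⟩ := hb
    set c : ℤ → ℤ := fun i => if i < 0 then 0 else b (i + 1) with hc
    have hcn : ∀ i, 0 ≤ i → c i = b (i + 1) := fun i hi => by simp [hc, not_lt.2 hi]
    have hc0 : ∀ i, i < 0 → c i = 0 := fun i hi => by simp [hc, hi]
    have hca : AdmissibleOn1 a 0 n c := by
      refine ⟨?_, ?_, ?_⟩
      · intro i hi
        have hi0 : 0 ≤ i := by
          by_contra hh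
          exact hi (hc0 i (by omega))
        rw [hcn i hi0] at hi
        have := (hs _ hi).2
        push_cast at this
        exact ⟨hi0, by omega⟩
      · intro i
        by_cases hi : i < 0
        · rw [hc0 i hi]; omega
        · rw [hcn i (by omega)]; exact hd _
      · rintro ⟨i, j, hij, h1, h2, h3⟩
        have hi0 : 0 ≤ i := by
          by_contra hh
          rw [hc0 i (by omega)] at h1
          omega
        rw [hcn i hi0] at h1
        rw [hcn j (by omega)] at h2
        refine hf ⟨i + 1, j + 1, by omega, h1, h2, fun k hk1 hk2 => ?_⟩
        have := h3 (k - 1) (by omega) (by omega)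
        rw [hcn _ (by omega)] at this
        simpa using this
    have hctop : NoInit a c → c 0 ≤ (a : ℤ) - 2 := by
      intro hn
      by_contra hlt
      exact hn ⟨0, le_rfl, by have := (hca.2.1 0).2; omega, fun k h1 h2 => by omega⟩
    obtain ⟨y, hy, hx0, hy0, hyt, hyn⟩ := ih c hca hctop
    -- After the digit `a - 1` the remaining digits may not start with `(a-2)⋯(a-2)(a-1)`.
    have hmax : b 0 = (a : ℤ) - 1 → NoInit a c := by
      rintro h0 ⟨j, hj0, hj, hk⟩
      rw [hcn j hj0] at hj
      refine hf ⟨0, j + 1, by omega, h0, hj, fun k hk1 hk2 => ?_⟩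
      have := hk (k - 1) (by omega) (by omega)
      rw [hcn _ (by omega)] at this
      simpa using this
    have hpass : NoInit a b → b 0 = (a : ℤ) - 2 → NoInit a c := by
      rintro hn h0 ⟨j, hj0, hj, hk⟩
      rw [hcn j hj0] at hj
      refine hn ⟨j + 1, by omega, hj, fun k hk1 hk2 => ?_⟩
      rcases hk1.eq_or_lt with rfl | hk1
      · exact h0
      have := hk (k - 1) (by omega) (by omega)
      rw [hcn _ (by omega)] at this
      simpa using this
    have hsum : ∑ i ∈ Finset.Icc (0 : ℤ) (n + 1 : ℕ), (b i : ℝ) * theta1 a ^ i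
        = b 0 + theta1 a * ∑ i ∈ Finset.Icc (0 : ℤ) n, (c i : ℝ) * theta1 a ^ i := by
      rw [sum_Icc_succ, Finset.mul_sum]
      congr 1
      · simp
      · refine Finset.sum_congr rfl fun i hi => ?_
        rw [hcn i (Finset.mem_Icc.1 hi).1, zpow_add_one₀ (by linarith)]
        ring
    have h01 : (0 : ℝ) ≤ b 0 := by exact_mod_cast (hd 0).1
    have hinv := theta_inv a ha
    have hr : 0 < (a : ℝ) - theta1 a := by linarith
    rw [hsum]
    refine ⟨b 0 + (theta1 a)⁻¹ * y, (IsGalConj.int _).add (hy.theta_mul ha), by positivity,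
      by positivity, ?_, ?_⟩
    · rw [hinv]
      rcases (hd 0).2.eq_or_lt with h0 | h0
      · have := hyn (hmax h0)
        have e : (b 0 : ℝ) = a - 1 := by rw [h0]; push_cast; ring
        nlinarith
      · have e : (b 0 : ℝ) ≤ a - 2 := by exact_mod_cast (show b 0 ≤ (a : ℤ) - 2 by omega)
        nlinarith
    · intro hn
      rw [hinv]
      rcases (htop hn).eq_or_lt with h0 | h0
      · have := hyn (hpass hn h0)
        have e : (b 0 : ℝ) = a - 2 := by rw [h0]; push_cast; ring
        nlinarith
      · have e : (b 0 : ℝ) ≤ a - 3 := by exact_mod_cast (show b 0 ≤ (a : ℤ) - 3 by omega)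
        nlinarith

/-- The coefficient of `θ` is controlled by `x - x' = q(θ - θ⁻¹)`, where `2(θ - θ⁻¹) > a`. -/
lemma coeff_ge_neg_one (a : ℕ) (ha : 3 ≤ a) (p q : ℤ)
    (h : -(a : ℝ) ≤ (p + q * theta1 a) - (p + q * (theta1 a)⁻¹)) : -1 ≤ q := by
  by_contra hq
  have hq' : (q : ℝ) ≤ -2 := by exact_mod_cast (show q ≤ -2 by omega)
  have h3 : (3 : ℝ) ≤ a := by exact_mod_cast ha
  have hg := theta_gt a ha
  rw [theta_inv a ha] at h
  nlinarith

lemma eq_zero_of_small (a : ℕ) (ha : 3 ≤ a) (x y : ℝ) (h : IsGalConj a x y)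
    (hx0 : 0 ≤ x) (hx1 : x < 1) (hy0 : 0 ≤ y) (hy : y < theta1 a) : x = 0 := by
  obtain ⟨p, q, rfl, rfl⟩ := h
  have h3 : (3 : ℝ) ≤ a := by exact_mod_cast ha
  have hg := theta_gt a ha
  have hl := theta_lt a ha
  have h1 := coeff_ge_neg_one a ha p q (by linarith)
  rw [theta_inv a ha] at hy0 hy
  have h2 : q < 1 := by
    by_contra hq
    have hq' : (1 : ℝ) ≤ q := by exact_mod_cast (show 1 ≤ q by omega)
    nlinarith
  obtain rfl | rfl : q = -1 ∨ q = 0 := by omega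
  · exfalso
    push_cast at *
    have e1 : p < (a : ℤ) := by
      exact_mod_cast (show (p : ℝ) < (a : ℝ) by linarith)
    have e2 : (a : ℤ) - 1 < p := by
      exact_mod_cast (show (a : ℝ) - 1 < (p : ℝ) by linarith)
    omega
  · simp at hx0 hx1 ⊢
    have e1 : p < 1 := by exact_mod_cast hx1
    omega

/-- Removing the digit `⌊x'⌋` from `x` keeps it nonnegative: the only candidate for a negative
difference is `1 - θ`, which would force `x' = θ`. -/
lemma floor_conj_le (a : ℕ) (ha : 3 ≤ a) (x y : ℝ) (h : IsGalConj a x y)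
    (hx0 : 0 ≤ x) (hy0 : 0 ≤ y) (hy : y < theta1 a) : (⌊y⌋ : ℝ) ≤ x := by
  by_contra hlt
  push Not at hlt
  have h3 : (3 : ℝ) ≤ a := by exact_mod_cast ha
  have hg := theta_gt a ha
  have hl := theta_lt a ha
  have f1 := Int.floor_le y
  have f2 := Int.lt_floor_add_one y
  set d := ⌊y⌋
  obtain ⟨p, q, rfl, rfl⟩ := h
  have hd : d ≤ (a : ℤ) - 1 := by
    have : d < (a : ℤ) := by exact_mod_cast (show (d : ℝ) < (a : ℝ) by linarith)
    omega
  have h1 := coeff_ge_neg_one a ha p q (by linarith)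
  rw [theta_inv a ha] at f1 f2 hy
  have h2 : q < 0 := by
    by_contra hq
    have hq' : (0 : ℝ) ≤ q := by exact_mod_cast (show 0 ≤ q by omega)
    nlinarith
  obtain rfl : q = -1 := by omega
  push_cast at *
  have e1 : p < d + 2 := by exact_mod_cast (show (p : ℝ) < d + 2 by linarith)
  have e2 : d < p := by exact_mod_cast (show (d : ℝ) < p by linarith)
  have e3 : p < (a : ℤ) := by exact_mod_cast (show (p : ℝ) < (a : ℝ) by linarith)
  have e4 : (a : ℤ) - 1 < p := by exact_mod_cast (show (a : ℝ) - 1 < (p : ℝ) by linarith)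
  omega

/-- Every `x ≥ 0` in `ℤ[θ]` with `0 ≤ x' < θ` has an admissible expansion; its digits are those of
the greedy expansion of `x'`. -/
lemma exists_admissible (a : ℕ) (ha : 3 ≤ a) (n : ℕ) (x y : ℝ) (h : IsGalConj a x y)
    (hx0 : 0 ≤ x) (hx : x < theta1 a ^ n) (hy0 : 0 ≤ y) (hy : y < theta1 a) :
    ∃ b : ℤ → ℤ, AdmissibleOn1 a 0 n b ∧
      x = ∑ i ∈ Finset.Icc (0 : ℤ) n, (b i : ℝ) * theta1 a ^ i ∧
      (y < theta1 a - 1 → NoInit a b) := by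
  have h2 := theta_two_lt a ha
  have hg := theta_gt a ha
  have hl := theta_lt a ha
  have hq := theta_quad a ha
  have h3 : (3 : ℝ) ≤ a := by exact_mod_cast ha
  induction n generalizing x y with
  | zero =>
    have := eq_zero_of_small a ha x y h hx0 (by simpa using hx) hy0 hy
    subst this
    refine ⟨fun _ => 0, ⟨by simp, fun i => by dsimp only; omega, ?_⟩, by simp, ?_⟩
    · rintro ⟨i, j, -, h1, -⟩
      dsimp only at h1
      omega
    · rintro - ⟨j, -, h1, -⟩
      dsimp only at h1
      omega
  | succ n ih =>
    have hfl := floor_conj_le a ha x y h hx0 hy0 hy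
    have f1 := Int.floor_le y
    have f2 := Int.lt_floor_add_one y
    have f0 : 0 ≤ ⌊y⌋ := Int.floor_nonneg.2 hy0
    set d := ⌊y⌋
    have hd : d ≤ (a : ℤ) - 1 := by
      have : d < (a : ℤ) := by exact_mod_cast (show (d : ℝ) < (a : ℝ) by linarith)
      omega
    have h0 : (0 : ℝ) ≤ d := by exact_mod_cast f0
    have hcj : IsGalConj a ((theta1 a)⁻¹ * (x + -d)) (theta1 a * (y + -d)) :=
      (h.add (IsGalConj.int d).neg).theta_inv_mul ha
    obtain ⟨c, ⟨hs, hdg, hf⟩, hsum, hno⟩ := ih _ _ hcj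
      (mul_nonneg (by positivity) (by linarith))
      (by
        rw [inv_mul_lt_iff₀ (by linarith), mul_comm, ← pow_succ]
        linarith)
      (mul_nonneg (by linarith) (by linarith)) (by nlinarith)
    have hcneg : ∀ i, i < 0 → c i = 0 := by
      intro i hi
      by_contra hne
      have := (hs i hne).1
      omega
    set b : ℤ → ℤ := fun i => if i = 0 then d else c (i - 1) with hb
    have hb0 : b 0 = d := by simp [hb]
    have hbs : ∀ i, i ≠ 0 → b i = c (i - 1) := fun i hi => by simp [hb, hi]
    refine ⟨b, ⟨?_, ?_, ?_⟩, ?_, ?_⟩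
    · intro i hi
      push_cast
      by_cases hi0 : i = 0
      · omega
      · rw [hbs i hi0] at hi
        have := hs _ hi
        omega
    · intro i
      by_cases hi0 : i = 0
      · rw [hi0, hb0]; exact ⟨f0, hd⟩
      · rw [hbs i hi0]; exact hdg _
    · rintro ⟨i, j, hij, h1, h2, hk⟩
      have hi0 : 0 ≤ i := by
        by_contra hh
        rw [hbs i (by omega), hcneg _ (by omega)] at h1
        omega
      rw [hbs j (by omega)] at h2
      rcases hi0.eq_or_lt with rfl | hi0
      · rw [hb0] at h1
        have hdr : (d : ℝ) = a - 1 := by rw [h1]; push_cast; ring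
        refine hno (by nlinarith) ⟨j - 1, by omega, h2, fun k hk1 hk2 => ?_⟩
        have := hk (k + 1) (by omega) (by omega)
        rw [hbs _ (by omega)] at this
        simpa using this
      · rw [hbs i (by omega)] at h1
        refine hf ⟨i - 1, j - 1, by omega, h1, h2, fun k hk1 hk2 => ?_⟩
        have := hk (k + 1) (by omega) (by omega)
        rw [hbs _ (by omega)] at this
        simpa using this
    · rw [sum_Icc_succ, hb0]
      have : ∑ i ∈ Finset.Icc (0 : ℤ) n, (b (i + 1) : ℝ) * theta1 a ^ (i + 1)
          = theta1 a * ∑ i ∈ Finset.Icc (0 : ℤ) n, (c i : ℝ) * theta1 a ^ i := by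
        rw [Finset.mul_sum]
        refine Finset.sum_congr rfl fun i hi => ?_
        have := (Finset.mem_Icc.1 hi).1
        rw [hbs _ (by omega), zpow_add_one₀ (by linarith), add_sub_cancel_right]
        ring
      rw [this, ← hsum, mul_inv_cancel_left₀ (by linarith)]
      simp
    · rintro hy1 ⟨j, hj0, hj, hk⟩
      have hd2 : d < (a : ℤ) - 1 := by
        exact_mod_cast (show (d : ℝ) < (a : ℝ) - 1 by linarith)
      rcases hj0.eq_or_lt with rfl | hj0
      · rw [hb0] at hj; omega
      have h0 := hk 0 le_rfl hj0
      rw [hb0] at h0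
      rw [hbs j (by omega)] at hj
      have hdr : (d : ℝ) = a - 2 := by rw [h0]; push_cast; ring
      refine hno (by nlinarith) ⟨j - 1, by omega, hj, fun k hk1 hk2 => ?_⟩
      have := hk (k + 1) (by omega) (by omega)
      rw [hbs _ (by omega)] at this
      simpa using this

lemma Ztheta_neg (a : ℕ) (x : ℝ) (h : x ∈ Ztheta1 a) : -x ∈ Ztheta1 a := by
  obtain ⟨ε, M, b, hε, hM, hb, rfl⟩ := h
  refine ⟨-ε, M, b, by omega, hM, hb, by push_cast; ring⟩

lemma mem_Ztheta_of_nonneg (a : ℕ) (ha : 3 ≤ a) (x y : ℝ) (h : IsGalConj a x y)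
    (hx0 : 0 ≤ x) (hy0 : 0 ≤ y) (hy : y < theta1 a) : x ∈ Ztheta1 a := by
  obtain ⟨n, hn⟩ := pow_unbounded_of_one_lt x
    (show 1 < theta1 a by linarith [theta_two_lt a ha])
  obtain ⟨b, hb, hs, -⟩ := exists_admissible a ha n x y h hx0 hn hy0 hy
  exact ⟨1, n, b, Or.inl rfl, by positivity, hb, by simpa using hs⟩

/-- Inside `O_K⁰`, the `θ`-integers are cut out by the window `|x'| < θ`. -/
lemma mem_Ztheta_iff (a : ℕ) (ha : 3 ≤ a) (x y : ℝ) (h : IsGalConj a x y) (hxy : 0 ≤ x * y) :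
    x ∈ Ztheta1 a ↔ |y| < theta1 a := by
  constructor
  · rintro ⟨ε, M, b, hε, hM, hb, hx⟩
    lift M to ℕ using hM
    obtain ⟨z, hz, -, hz0, hzt, -⟩ := conj_lt_of_admissible a ha M b hb
    rcases hε with rfl | rfl
    · rw [show x = _ by simpa using hx] at h
      rw [h.unique ha hz, abs_of_nonneg hz0]
      exact hzt
    · rw [show x = _ by simpa using hx] at h
      rw [h.unique ha hz.neg, abs_neg, abs_of_nonneg hz0]
      exact hzt
  · intro hy
    by_cases hx : x = 0
    · subst hx
      have hc := IsGalConj.int (a := a) 0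
      exact mem_Ztheta_of_nonneg a ha 0 0 (by simpa using hc) le_rfl le_rfl
        (by linarith [theta_two_lt a ha])
    rw [abs_lt] at hy
    rcases lt_or_gt_of_ne hx with hx | hx
    · have hy0 : y ≤ 0 := by nlinarith
      have := mem_Ztheta_of_nonneg a ha _ _ h.neg (by linarith) (by linarith) (by linarith)
      simpa using Ztheta_neg a _ this
    · have hy0 : 0 ≤ y := by nlinarith
      exact mem_Ztheta_of_nonneg a ha _ _ h hx.le hy0 hy.2

/-! ### The norm in terms of the conjugate -/

/-- For `0 ≠ x ∈ O_K⁰`, `θ^{-v(x)}` is the largest power of `θ` not exceeding `|x'|`. -/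
lemma vval_spec (a : ℕ) (ha : 3 ≤ a) (x y : ℝ) (h : IsGalConj a x y) (hx : x ≠ 0)
    (hxy : 0 ≤ x * y) :
    theta1 a ^ (-vval1 a x) ≤ |y| ∧ |y| < theta1 a ^ (-vval1 a x + 1) := by
  have h2 := theta_two_lt a ha
  have h0 : 0 < theta1 a := by linarith
  obtain ⟨n, hn1, hn2⟩ := exists_mem_Ico_zpow (abs_pos.2 (h.ne_zero ha hx))
    (show 1 < theta1 a by linarith)
  have hset : { k : ℤ | x / theta1 a ^ k ∈ Ztheta1 a } = Set.Iic (-n) := by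
    ext k
    have hk : 0 < theta1 a ^ k := zpow_pos h0 k
    have hprod : 0 ≤ x / theta1 a ^ k * (y * theta1 a ^ k) := by
      rwa [show x / theta1 a ^ k * (y * theta1 a ^ k) = x * y by field_simp]
    rw [Set.mem_ofPred_eq, mem_Ztheta_iff a ha _ _ (h.div_zpow ha k) hprod, abs_mul,
      abs_of_pos hk, Set.mem_Iic]
    have e : |y| * theta1 a ^ k < theta1 a ↔ |y| < theta1 a ^ (1 - k) := by
      rw [zpow_sub₀ h0.ne', zpow_one, lt_div_iff₀ hk]
    rw [e]
    constructor
    · intro hlt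
      have := (zpow_lt_zpow_iff_right₀ (show 1 < theta1 a by linarith)).1 (hn1.trans_lt hlt)
      omega
    · intro hle
      exact hn2.trans_le (zpow_le_zpow_right₀ (by linarith) (by omega))
  rw [vval1, hset, csSup_Iic, neg_neg]
  exact ⟨hn1, hn2⟩

lemma inOK0_iff (a : ℕ) (ha : 3 ≤ a) (x y : ℝ) (h : IsGalConj a x y) :
    inOK0 a x ↔ 0 ≤ x * y := by
  constructor
  · rintro ⟨p, q, hx, hp⟩
    rwa [h.unique ha ⟨p, q, hx, rfl⟩]
  · intro hp
    obtain ⟨p, q, hx, rfl⟩ := h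
    exact ⟨p, q, hx, hp⟩

/-- For `x ≠ 0`, `|x|_θ` is the largest power of `θ` not exceeding `|x'|` if `x x' ≥ 0`, or
`(1 - θ⁻¹)|x'|` if `x x' < 0`. -/
lemma thNorm_spec (a : ℕ) (ha : 3 ≤ a) (x y : ℝ) (h : IsGalConj a x y) (hx : x ≠ 0) :
    ∃ n : ℤ, thNorm1 a x = theta1 a ^ n ∧
      ((0 ≤ x * y ∧ theta1 a ^ n ≤ |y| ∧ |y| < theta1 a ^ (n + 1)) ∨
        (x * y < 0 ∧ theta1 a ^ n ≤ (1 - (theta1 a)⁻¹) * |y| ∧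
          (1 - (theta1 a)⁻¹) * |y| < theta1 a ^ (n + 1))) := by
  have h2 := theta_two_lt a ha
  have hi : (theta1 a)⁻¹ < 1 := inv_lt_one_of_one_lt₀ (by linarith)
  by_cases hxy : 0 ≤ x * y
  · refine ⟨-vval1 a x, ?_, Or.inl ⟨hxy, vval_spec a ha x y h hx hxy⟩⟩
    rw [thNorm1, if_neg hx, if_pos ((inOK0_iff a ha x y h).2 hxy)]
  · refine ⟨-vval1 a ((theta1 a - 1) * x), ?_, Or.inr ⟨not_le.1 hxy, ?_⟩⟩
    · rw [thNorm1, if_neg hx, if_neg (fun hh => hxy ((inOK0_iff a ha x y h).1 hh))]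
    · have hT : IsGalConj a ((theta1 a - 1) * x) (((theta1 a)⁻¹ - 1) * y) := by
        convert (h.theta_mul ha).add h.neg using 1 <;> ring
      have := vval_spec a ha _ _ hT (mul_ne_zero (by linarith) hx) (by
        have e : (theta1 a - 1) * x * (((theta1 a)⁻¹ - 1) * y)
          = (theta1 a - 1) * (1 - (theta1 a)⁻¹) * -(x * y) := by ring
        rw [e]
        exact mul_nonneg (mul_nonneg (by linarith) (by linarith)) (by linarith))
      rwa [abs_mul, abs_sub_comm, abs_of_pos (show 0 < 1 - (theta1 a)⁻¹ by linarith)] at this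

lemma thNorm_zero (a : ℕ) : thNorm1 a 0 = 0 := by simp [thNorm1]

lemma thNorm_nonneg (a : ℕ) (ha : 3 ≤ a) (x : ℝ) : 0 ≤ thNorm1 a x := by
  have h2 := theta_two_lt a ha
  unfold thNorm1
  split_ifs <;> positivity

lemma thNorm_le_of_conj_lt (a : ℕ) (ha : 3 ≤ a) (x y : ℝ) (h : IsGalConj a x y) (m : ℤ)
    (hy : |y| < theta1 a ^ (m + 1)) : thNorm1 a x ≤ theta1 a ^ m := by
  have h2 := theta_two_lt a ha
  by_cases hx : x = 0
  · rw [hx, thNorm_zero]; positivity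
  have hi : 0 < (theta1 a)⁻¹ := by positivity
  obtain ⟨n, hn, hh⟩ := thNorm_spec a ha x y h hx
  have hny : theta1 a ^ n ≤ |y| := by
    rcases hh with ⟨-, h1, -⟩ | ⟨-, h1, -⟩
    · exact h1
    · nlinarith [abs_nonneg y]
  have := (zpow_lt_zpow_iff_right₀ (show 1 < theta1 a by linarith)).1 (hny.trans_lt hy)
  rw [hn]
  exact zpow_le_zpow_right₀ (by linarith) (by omega)

/-- For any nonzero `x ∈ ℤ[θ]`, `|x'| < θ²|x|_θ`, because `1/(1 - θ⁻¹) ≤ θ`. -/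
lemma conj_lt_of_thNorm (a : ℕ) (ha : 3 ≤ a) (x y : ℝ) (h : IsGalConj a x y) (hx : x ≠ 0) :
    ∃ n : ℤ, thNorm1 a x = theta1 a ^ n ∧ |y| < theta1 a ^ (n + 2) ∧
      (0 ≤ x * y → |y| < theta1 a ^ (n + 1)) := by
  have h2 := theta_two_lt a ha
  obtain ⟨n, hn, hh⟩ := thNorm_spec a ha x y h hx
  refine ⟨n, hn, ?_, ?_⟩
  · have e : theta1 a ^ (n + 2) = theta1 a * theta1 a ^ (n + 1) := by
      rw [show n + 2 = (n + 1) + 1 by ring, zpow_add_one₀ (by linarith)]; ring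
    have hp : 0 < theta1 a ^ (n + 1) := zpow_pos (by linarith) _
    rw [e]
    rcases hh with ⟨-, -, h1⟩ | ⟨-, -, h1⟩
    · nlinarith
    · have h3 : theta1 a * ((1 - (theta1 a)⁻¹) * |y|) = (theta1 a - 1) * |y| := by
        field_simp
      have h4 := mul_lt_mul_of_pos_left h1 (show 0 < theta1 a by linarith)
      rw [h3] at h4
      nlinarith [abs_nonneg y]
  · intro hxy
    rcases hh with ⟨-, -, h1⟩ | ⟨h0, -⟩
    · exact h1
    · linarith

/-- If `|f'|, |g'| < θ^r·|·|_θ` for the nonzero ones among `f, g`, then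
`|f + g|_θ ≤ θ^r·max(|f|_θ, |g|_θ)`: the extra factor `2` in `|f' + g'|` costs less than `θ`. -/
lemma thNorm_add_le (a : ℕ) (ha : 3 ≤ a) (f g y z : ℝ) (hf : IsGalConj a f y) (hg : IsGalConj a g z)
    (r : ℕ) (hr : f ≠ 0 → ∃ n : ℤ, thNorm1 a f = theta1 a ^ n ∧ |y| < theta1 a ^ (n + r))
    (hs : g ≠ 0 → ∃ n : ℤ, thNorm1 a g = theta1 a ^ n ∧ |z| < theta1 a ^ (n + r)) :
    thNorm1 a (f + g) ≤ theta1 a ^ r * max (thNorm1 a f) (thNorm1 a g) := by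
  have h2 := theta_two_lt a ha
  have h1 : 1 < theta1 a := by linarith
  have hone : 1 ≤ theta1 a ^ r := one_le_pow₀ h1.le
  by_cases hf0 : f = 0
  · rw [hf0, zero_add, thNorm_zero, max_eq_right (thNorm_nonneg a ha g)]
    exact le_mul_of_one_le_left (thNorm_nonneg a ha g) hone
  by_cases hg0 : g = 0
  · rw [hg0, add_zero, thNorm_zero, max_eq_left (thNorm_nonneg a ha f)]
    exact le_mul_of_one_le_left (thNorm_nonneg a ha f) hone
  obtain ⟨n, hn, hy⟩ := hr hf0
  obtain ⟨k, hk, hz⟩ := hs hg0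
  have hmono : Monotone fun i : ℤ => theta1 a ^ i := fun i j hij =>
    zpow_le_zpow_right₀ h1.le hij
  have hmax : max (thNorm1 a f) (thNorm1 a g) = theta1 a ^ (max n k) := by
    rw [hn, hk]
    exact (hmono.map_max (a := n) (b := k)).symm
  have e : theta1 a ^ r * theta1 a ^ (max n k) = theta1 a ^ (max n k + r) := by
    rw [zpow_add₀ (by linarith), zpow_natCast, mul_comm]
  rw [hmax, e]
  apply thNorm_le_of_conj_lt a ha _ _ (hf.add hg)
  have hy' : |y| < theta1 a ^ (max n k + r) :=
    hy.trans_le (zpow_le_zpow_right₀ h1.le (by have := le_max_left n k; omega))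
  have hz' : |z| < theta1 a ^ (max n k + r) :=
    hz.trans_le (zpow_le_zpow_right₀ h1.le (by have := le_max_right n k; omega))
  rw [zpow_add_one₀ (by linarith)]
  have hp : 0 < theta1 a ^ (max n k + r) := zpow_pos (by linarith) _
  have := abs_add_le y z
  nlinarith

lemma inOK0.isConj {a : ℕ} {x : ℝ} (h : inOK0 a x) : ∃ y, IsGalConj a x y ∧ 0 ≤ x * y := by
  obtain ⟨p, q, hx, hp⟩ := h
  exact ⟨_, ⟨p, q, hx, rfl⟩, hp⟩

lemma inOK1.isConj {a : ℕ} {x : ℝ} (h : inOK1 a x) : ∃ y, IsGalConj a x y := by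
  obtain ⟨p, q, hx, -⟩ := h
  exact ⟨_, ⟨p, q, hx, rfl⟩⟩

/-- The bound with constant `θ²`, valid for arbitrary `f, g ∈ ℤ[θ]`. -/
lemma thNorm_add_le_sq (a : ℕ) (ha : 3 ≤ a) (f g y z : ℝ) (hf : IsGalConj a f y)
    (hg : IsGalConj a g z) :
    thNorm1 a (f + g) ≤ theta1 a ^ 2 * max (thNorm1 a f) (thNorm1 a g) := by
  refine thNorm_add_le a ha f g y z hf hg 2 (fun h0 => ?_) (fun h0 => ?_)
  · obtain ⟨n, h1, h2, -⟩ := conj_lt_of_thNorm a ha f y hf h0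
    exact ⟨n, h1, by exact_mod_cast h2⟩
  · obtain ⟨n, h1, h2, -⟩ := conj_lt_of_thNorm a ha g z hg h0
    exact ⟨n, h1, by exact_mod_cast h2⟩

/-- Infratriangle inequality, norm `1` case. For `f, g ∈ ℤ[θ]`:
(1) if `f, g ∈ O_K⁰` then `|f + g|_θ ≤ θ·max(|f|_θ, |g|_θ)`;
(2) if `f, g ∈ O_K¹` then `|f + g|_θ ≤ θ²·max(|f|_θ, |g|_θ)`;
(3) if `f ∈ O_K⁰` and `g ∈ O_K¹` then `|f + g|_θ ≤ θ⁴·max(|f|_θ, |g|_θ)`.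
In particular `|·|_θ` is an infranorm with constant `ρ = θ⁴`. -/
theorem infratriangle_pos_one (a : ℕ) (ha : 3 ≤ a) (f g : ℝ) :
    ((inOK0 a f ∧ inOK0 a g) →
      thNorm1 a (f + g) ≤ theta1 a * max (thNorm1 a f) (thNorm1 a g)) ∧
    ((inOK1 a f ∧ inOK1 a g) →
      thNorm1 a (f + g) ≤ theta1 a ^ 2 * max (thNorm1 a f) (thNorm1 a g)) ∧
    ((inOK0 a f ∧ inOK1 a g) →
      thNorm1 a (f + g) ≤ theta1 a ^ 4 * max (thNorm1 a f) (thNorm1 a g)) := by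
  refine ⟨?_, ?_, ?_⟩
  · rintro ⟨hf, hg⟩
    obtain ⟨y, hy, hfy⟩ := hf.isConj
    obtain ⟨z, hz, hgz⟩ := hg.isConj
    rw [← pow_one (theta1 a)]
    refine thNorm_add_le a ha f g y z hy hz 1 (fun h0 => ?_) (fun h0 => ?_)
    · obtain ⟨n, h1, -, h2⟩ := conj_lt_of_thNorm a ha f y hy h0
      exact ⟨n, h1, by exact_mod_cast h2 hfy⟩
    · obtain ⟨n, h1, -, h2⟩ := conj_lt_of_thNorm a ha g z hz h0
      exact ⟨n, h1, by exact_mod_cast h2 hgz⟩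
  · rintro ⟨hf, hg⟩
    obtain ⟨y, hy⟩ := hf.isConj
    obtain ⟨z, hz⟩ := hg.isConj
    exact thNorm_add_le_sq a ha f g y z hy hz
  · rintro ⟨hf, hg⟩
    obtain ⟨y, hy, -⟩ := hf.isConj
    obtain ⟨z, hz⟩ := hg.isConj
    refine (thNorm_add_le_sq a ha f g y z hy hz).trans ?_
    have h2 := theta_two_lt a ha
    exact mul_le_mul_of_nonneg_right (pow_le_pow_right₀ (by linarith) (by norm_num))
      (le_max_of_le_left (thNorm_nonneg a ha f))
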